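/- Suppose the GI/G/1-type Markov chain is irreducible and aperiodic and the phase matrix A is irreducible. Then the chain is strongly ergodic if and only if A is not stochastic, i.e., if and only if Ae ≠ e. -/

import Mathlib

open Filter Topology
open scoped ENNReal NNReal BigOperators

namespace GIG1

/-- The state space of a `GI/G/1`-type Markov chain: level `i : ℕ`, phase `j : Fin m`. -/
abbrev S (m : ℕ) := ℕ × Fin m

/-- The transition kernel of the `GI/G/1`-type Markov chain with matrix blocks `A, B`. -/
noncomputable def P {m : ℕ} (A B : ℤ → Matrix (Fin m) (Fin m) ℝ) : S m → S m → ℝ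
  | (0, j), (k, s) => B (k : ℤ) j s
  | (i + 1, j), (0, s) => B (-(i + 1 : ℤ)) j s
  | (i + 1, j), (k + 1, s) => A ((k : ℤ) - (i : ℤ)) j s

/-- `n`-step transition probabilities. -/
noncomputable def Pn {m : ℕ} (P : S m → S m → ℝ) : ℕ → S m → S m → ℝ
  | 0, x, y => if x = y then 1 else 0
  | n + 1, x, y => ∑' z : S m, P x z * Pn P n z y

def Stochastic {m : ℕ} (P : S m → S m → ℝ) : Prop :=
  (∀ x y, 0 ≤ P x y) ∧ ∀ x, HasSum (P x) 1

def ChainIrreducible {m : ℕ} (P : S m → S m → ℝ) : Prop :=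
  ∀ x y, ∃ n, 1 ≤ n ∧ 0 < Pn P n x y

def ChainAperiodic {m : ℕ} (P : S m → S m → ℝ) : Prop :=
  ∀ x, ∃ N, ∀ n ≥ N, 0 < Pn P n x x

/-- `pd` is a stationary probability distribution of `P`; for an irreducible aperiodic chain
this is equivalent to positive recurrence. -/
def IsStationary {m : ℕ} (P : S m → S m → ℝ) (pd : S m → ℝ) : Prop :=
  (∀ x, 0 ≤ pd x) ∧ HasSum pd 1 ∧ ∀ y, HasSum (fun x => pd x * P x y) (pd y)

/-- The phase matrix `A = ∑ₖ Aₖ`. -/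
noncomputable def matA {m : ℕ} (A : ℤ → Matrix (Fin m) (Fin m) ℝ) : Matrix (Fin m) (Fin m) ℝ :=
  Matrix.of fun r s => ∑' k : ℤ, A k r s

/-- The phase matrix `A = ∑ₖ Aₖ` is stochastic. -/
def PhaseStochastic {m : ℕ} (A : ℤ → Matrix (Fin m) (Fin m) ℝ) : Prop :=
  ∀ r, HasSum (fun p : ℤ × Fin m => A p.1 r p.2) 1

/-- Irreducibility of a nonnegative matrix. -/
def MatIrreducible {m : ℕ} (M : Matrix (Fin m) (Fin m) ℝ) : Prop :=
  ∀ r s, ∃ n, 1 ≤ n ∧ 0 < (M ^ n) r s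

/-- Radius of convergence of a power series with nonnegative coefficients. -/
noncomputable def radius (c : ℕ → ℝ) : ℝ≥0∞ :=
  ⨆ (r : ℝ≥0) (_ : Summable fun k => c k * (r : ℝ) ^ k), (r : ℝ≥0∞)

/-- `φ_{A+}`: the minimum over entries of the radii of convergence of `∑_{k ≥ 1} A_k(r,s) z^k`. -/
noncomputable def phiA {m : ℕ} (A : ℤ → Matrix (Fin m) (Fin m) ℝ) : ℝ≥0∞ :=
  ⨅ (r : Fin m) (s : Fin m), radius fun k => A ((k : ℤ) + 1) r s

/-- `φ_{B+}`. -/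
noncomputable def phiB {m : ℕ} (B : ℤ → Matrix (Fin m) (Fin m) ℝ) : ℝ≥0∞ :=
  ⨅ (r : Fin m) (s : Fin m), radius fun k => B ((k : ℤ) + 1) r s

/-- The matrix sequence `{C_k}_{k ≥ 1}` is light-tailed. -/
def LightMat {m : ℕ} (C : ℤ → Matrix (Fin m) (Fin m) ℝ) : Prop :=
  ∀ r s, ∃ ε > (0 : ℝ),
    Summable fun k : ℕ => C ((k : ℤ) + 1) r s * Real.exp (ε * ((k : ℝ) + 1))

/-- `A^*(z) = ∑_{k ∈ ℤ} z^k A_k` for complex `z`. -/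
noncomputable def AstarC {m : ℕ} (A : ℤ → Matrix (Fin m) (Fin m) ℝ) (z : ℂ) :
    Matrix (Fin m) (Fin m) ℂ :=
  Matrix.of fun r s => ∑' k : ℤ, (A k r s : ℂ) * z ^ k

/-- `A^*(z) = ∑_{k ∈ ℤ} z^k A_k` for real `z`. -/
noncomputable def AstarR {m : ℕ} (A : ℤ → Matrix (Fin m) (Fin m) ℝ) (z : ℝ) :
    Matrix (Fin m) (Fin m) ℝ :=
  Matrix.of fun r s => ∑' k : ℤ, A k r s * z ^ k

/-- The set `Ω = {z ∈ ℂ : 1 < |z| < φ_{A+}, det(I - A^*(z)) = 0}`. -/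
def Omega {m : ℕ} (A : ℤ → Matrix (Fin m) (Fin m) ℝ) : Set ℂ :=
  {z | 1 < ‖z‖ ∧ ENNReal.ofReal ‖z‖ < phiA A ∧ (1 - AstarC A z).det = 0}

/-- `η`: the minimal modulus of an element of `Ω`, or `∞` when `Ω = ∅`. -/
noncomputable def eta {m : ℕ} (A : ℤ → Matrix (Fin m) (Fin m) ℝ) : ℝ≥0∞ :=
  sInf ((fun z : ℂ => ENNReal.ofReal ‖z‖) '' Omega A)

/-- The largest (Perron–Frobenius) eigenvalue of a nonnegative matrix. -/
noncomputable def chi {m : ℕ} (M : Matrix (Fin m) (Fin m) ℝ) : ℝ :=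
  sSup {r : ℝ | ∃ v : Fin m → ℝ, v ≠ 0 ∧ M.mulVec v = r • v}

/-!
For a stochastic kernel `p`, strong ergodicity is equivalent to Doeblin's condition, a lower bound
on one column of some power of `p`. Indeed, the pointwise infimum of the rows of `pⁿ` increases
with `n`; under Doeblin's condition its missing mass decays geometrically, so that the rows are
squeezed uniformly towards the limit of the infima, which is the stationary distribution.

If `Ae ≠ e`, then irreducibility of the substochastic matrix `A` gives `A^N e < e` for some `N`.
The phase process that avoids level `0` is dominated by `A`: the probability of avoiding level `0`
up to time `t` from phase `j` is at most `(A^t e)_j`, whatever the starting level. Hence level `0`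
is hit by time `N` with probability bounded below uniformly in the starting state, and as it is
finite, irreducibility and aperiodicity turn this into Doeblin's condition.

If `Ae = e`, the probability of jumping to a given state vanishes as the starting level tends to
infinity. The same then holds for the `n`-step probabilities, so Doeblin's condition fails.
-/

section ENNRealSums

variable {α : Type*}

theorem tsum_iSup_of_monotone {ι : Type*} [SemilatticeSup ι] [Nonempty ι] {f : ι → α → ℝ≥0∞}
    (hf : ∀ a, Monotone fun i => f i a) : ∑' a, ⨆ i, f i a = ⨆ i, ∑' a, f i a := by
  simp_rw [ENNReal.tsum_eq_iSup_sum, ENNReal.finsetSum_iSup_of_monotone hf]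
  exact iSup_comm

theorem tsum_tsub_of_le {f g : α → ℝ≥0∞} (hg : ∑' a, g a ≠ ⊤) (hgf : ∀ a, g a ≤ f a) :
    ∑' a, (f a - g a) = ∑' a, f a - ∑' a, g a := by
  refine ENNReal.eq_sub_of_add_eq hg ?_
  simp_rw [← ENNReal.tsum_add, fun a => tsub_add_cancel_of_le (hgf a)]

theorem eq_of_le_of_tsum_le {f g : α → ℝ≥0∞} (hf : ∑' a, f a ≠ ⊤) (hfg : ∀ a, f a ≤ g a)
    (hgf : ∑' a, g a ≤ ∑' a, f a) (a : α) : f a = g a :=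
  (hfg a).eq_of_not_lt fun hlt => hgf.not_gt (ENNReal.tsum_lt_tsum hf hfg hlt)

theorem ofReal_abs_toReal_sub_toReal_le {a b c : ℝ≥0∞} (ha : a ≠ ⊤) (hb : b ≠ ⊤) (hca : c ≤ a)
    (hcb : c ≤ b) : ENNReal.ofReal |a.toReal - b.toReal| ≤ (a - c) + (b - c) := by
  apply ENNReal.ofReal_le_of_le_toReal
  rw [ENNReal.toReal_add (ENNReal.sub_ne_top ha) (ENNReal.sub_ne_top hb),
    ENNReal.toReal_sub_of_le hca ha, ENNReal.toReal_sub_of_le hcb hb, abs_le]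
  have hca' := ENNReal.toReal_mono ha hca
  have hcb' := ENNReal.toReal_mono hb hcb
  constructor <;> linarith

theorem add_mul_tsub_le_tsum_mul {q f : α → ℝ≥0∞} {a η : ℝ≥0∞} {x₀ : α} (hq : ∑' z, q z = 1)
    (hη : η ≤ q x₀) (ha : ∀ z, a ≤ f z) : a + η * (f x₀ - a) ≤ ∑' z, q z * f z :=
  calc a + η * (f x₀ - a) ≤ a + q x₀ * (f x₀ - a) := by gcongr
    _ ≤ a + ∑' z, q z * (f z - a) := by
        gcongr
        exact ENNReal.le_tsum (f := fun z => q z * (f z - a)) x₀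
    _ = ∑' z, q z * (a + (f z - a)) := by
        simp_rw [mul_add, ENNReal.tsum_add, ENNReal.tsum_mul_right, hq, one_mul]
    _ = ∑' z, q z * f z := by simp_rw [fun z => add_tsub_cancel_of_le (ha z)]

theorem tendsto_tsum_natCast_sub (f : ℤ → ℝ≥0∞) :
    Tendsto (fun i : ℕ => ∑' k : ℕ, f (k - i)) atTop (𝓝 (∑' n, f n)) := by
  set g : ℕ → ℤ → ℝ≥0∞ := fun i => (Set.Ici (-i : ℤ)).indicator f
  have hg_mono (n : ℤ) : Monotone fun i => g i n := fun i j hij =>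
    Set.indicator_le_indicator_of_subset (Set.Ici_subset_Ici.2 (by omega)) (fun _ => zero_le) n
  have hg_sup (n : ℤ) : ⨆ i, g i n = f n :=
    le_antisymm (iSup_le fun i => Set.indicator_le_self _ _ _)
      (le_iSup_of_le n.natAbs (Set.indicator_of_mem (Set.mem_Ici.2 (by omega)) f).ge)
  have hg_tsum (i : ℕ) : ∑' k : ℕ, f (k - i) = ∑' n, g i n := by
    have hinj : Function.Injective fun k : ℕ => (k - i : ℤ) := fun k l h => by grind
    rw [← hinj.tsum_eq]
    · exact tsum_congr fun k => (Set.indicator_of_mem (Set.mem_Ici.2 (by omega)) f).symm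
    · intro n hn
      have := Set.mem_Ici.1 (Set.mem_of_indicator_ne_zero hn)
      exact ⟨(n + i).toNat, by grind⟩
  simp_rw [hg_tsum, ← hg_sup, tsum_iSup_of_monotone hg_mono]
  exact tendsto_atTop_iSup fun i j hij => ENNReal.tsum_le_tsum fun n => hg_mono n hij

end ENNRealSums

section KernelPowers

variable {α : Type*}

/-- A transition kernel on a discrete state space, with values in `ℝ≥0∞` so that all sums
converge, whose rows are probability distributions. -/
def RowStochastic (p : α → α → ℝ≥0∞) : Prop :=
  ∀ x, ∑' y, p x y = 1

variable {p : α → α → ℝ≥0∞}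

theorem RowStochastic.le_one (hp : RowStochastic p) (x y : α) : p x y ≤ 1 :=
  (ENNReal.le_tsum y).trans (hp x).le

theorem RowStochastic.ne_top (hp : RowStochastic p) (x y : α) : p x y ≠ ⊤ :=
  ne_top_of_le_ne_top ENNReal.one_ne_top (hp.le_one x y)

variable [DecidableEq α]

/-- The `n`-step transition probabilities of the kernel `p`, i.e. the `n`-th power of `p` as a
matrix indexed by the possibly infinite type `α`. -/
noncomputable def kernelPow (p : α → α → ℝ≥0∞) : ℕ → α → α → ℝ≥0∞
  | 0, x, y => if x = y then 1 else 0
  | n + 1, x, y => ∑' z, p x z * kernelPow p n z y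

theorem kernelPow_add (p : α → α → ℝ≥0∞) (n k : ℕ) (x y : α) :
    kernelPow p (n + k) x y = ∑' z, kernelPow p n x z * kernelPow p k z y := by
  induction n generalizing x with
  | zero => simp [kernelPow]
  | succ n ih =>
    rw [Nat.succ_add]
    simp_rw [kernelPow, ih, ← ENNReal.tsum_mul_left, ← ENNReal.tsum_mul_right, mul_assoc]
    exact ENNReal.tsum_comm

theorem kernelPow_succ' (p : α → α → ℝ≥0∞) (n : ℕ) (x y : α) :
    kernelPow p (n + 1) x y = ∑' z, kernelPow p n x z * p z y := by
  have hone (z : α) : kernelPow p 1 z y = p z y := by simp [kernelPow]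
  simp_rw [kernelPow_add, hone]

protected theorem RowStochastic.kernelPow (hp : RowStochastic p) (n : ℕ) :
    RowStochastic (kernelPow p n) := by
  induction n with
  | zero => simp [RowStochastic, kernelPow]
  | succ n ih =>
    intro x
    simp_rw [kernelPow]
    rw [ENNReal.tsum_comm]
    simp_rw [ENNReal.tsum_mul_left, ih _, mul_one, hp x]

end KernelPowers

section Doeblin

variable {α : Type*} [DecidableEq α] {p : α → α → ℝ≥0∞}

/-- Doeblin's condition: after some fixed number of steps, some state is charged with probability
bounded away from zero, uniformly in the starting state. -/
def DoeblinCondition (p : α → α → ℝ≥0∞) : Prop :=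
  ∃ (N : ℕ) (x₀ : α) (η : ℝ≥0∞), 0 < η ∧ ∀ x, η ≤ kernelPow p N x x₀

/-- The largest function below every row of the `n`-step kernel. -/
noncomputable def minorant (p : α → α → ℝ≥0∞) (n : ℕ) (y : α) : ℝ≥0∞ :=
  ⨅ x, kernelPow p n x y

/-- The increasing limit of the minorants; under Doeblin's condition it is the stationary
distribution. -/
noncomputable def minorantLimit (p : α → α → ℝ≥0∞) (y : α) : ℝ≥0∞ :=
  ⨆ n, minorant p n y

theorem minorant_le_kernelPow (p : α → α → ℝ≥0∞) (n : ℕ) (x y : α) :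
    minorant p n y ≤ kernelPow p n x y :=
  iInf_le _ x

theorem minorant_le_minorantLimit (p : α → α → ℝ≥0∞) (n : ℕ) (y : α) :
    minorant p n y ≤ minorantLimit p y :=
  le_iSup (fun n => minorant p n y) n

theorem RowStochastic.monotone_minorant (hp : RowStochastic p) (y : α) :
    Monotone fun n => minorant p n y := by
  refine monotone_nat_of_le_succ fun n => le_iInf fun x => ?_
  calc minorant p n y = ∑' z, p x z * minorant p n y := by
        rw [ENNReal.tsum_mul_right, hp, one_mul]
    _ ≤ kernelPow p (n + 1) x y :=
        ENNReal.tsum_le_tsum fun z => by gcongr; exact minorant_le_kernelPow p n z y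

theorem RowStochastic.monotone_tsum_minorant (hp : RowStochastic p) :
    Monotone fun n => ∑' y, minorant p n y :=
  fun _ _ hmn => ENNReal.tsum_le_tsum fun y => hp.monotone_minorant y hmn

theorem RowStochastic.tsum_minorant_le_one (hp : RowStochastic p) (n : ℕ) :
    ∑' y, minorant p n y ≤ 1 := by
  obtain _ | ⟨⟨x⟩⟩ := isEmpty_or_nonempty α
  · simp
  · exact (ENNReal.tsum_le_tsum fun y => minorant_le_kernelPow p n x y).trans_eq (hp.kernelPow n x)

theorem RowStochastic.minorant_add_mul_le (hp : RowStochastic p) {N : ℕ} {x₀ : α} {η : ℝ≥0∞}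
    (hη : ∀ x, η ≤ kernelPow p N x x₀) (n : ℕ) (y : α) :
    minorant p n y + η * (kernelPow p n x₀ y - minorant p n y) ≤ minorant p (N + n) y := by
  refine le_iInf fun x => ?_
  rw [kernelPow_add]
  exact add_mul_tsub_le_tsum_mul (hp.kernelPow N x) (hη x) fun z => minorant_le_kernelPow p n z y

theorem RowStochastic.tsum_tsub_minorant (hp : RowStochastic p) {n : ℕ} {f : α → ℝ≥0∞}
    (hf : ∑' y, f y = 1) (hle : ∀ y, minorant p n y ≤ f y) :
    ∑' y, (f y - minorant p n y) = 1 - ∑' y, minorant p n y := by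
  rw [tsum_tsub_of_le (ne_top_of_le_ne_top ENNReal.one_ne_top (hp.tsum_minorant_le_one n)) hle, hf]

theorem RowStochastic.one_sub_tsum_minorant_le_pow (hp : RowStochastic p) {N : ℕ} {x₀ : α}
    {η : ℝ≥0∞} (hη : ∀ x, η ≤ kernelPow p N x x₀) (k : ℕ) :
    1 - ∑' y, minorant p (k * N) y ≤ (1 - η) ^ k := by
  induction k with
  | zero => simp
  | succ k ih =>
    set s := ∑' y, minorant p (k * N) y
    have hgain : s + η * (1 - s) ≤ ∑' y, minorant p ((k + 1) * N) y := by
      rw [add_one_mul, add_comm (k * N), ← hp.tsum_tsub_minorant (hp.kernelPow (k * N) x₀)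
        (minorant_le_kernelPow p (k * N) x₀), ← ENNReal.tsum_mul_left, ← ENNReal.tsum_add]
      exact ENNReal.tsum_le_tsum (hp.minorant_add_mul_le hη (k * N))
    calc 1 - ∑' y, minorant p ((k + 1) * N) y ≤ 1 - (s + η * (1 - s)) := by gcongr
      _ = (1 - η) * (1 - s) := by
          rw [← tsub_tsub, ENNReal.sub_mul fun _ _ => by finiteness, one_mul]
      _ ≤ (1 - η) * (1 - η) ^ k := by gcongr
      _ = (1 - η) ^ (k + 1) := (pow_succ' _ _).symm

theorem DoeblinCondition.tendsto_tsum_minorant (h : DoeblinCondition p) (hp : RowStochastic p) :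
    Tendsto (fun n => ∑' y, minorant p n y) atTop (𝓝 1) := by
  obtain ⟨N, x₀, η, hη₀, hη⟩ := h
  have hpow : Tendsto (fun k : ℕ => (1 - η) ^ k) atTop (𝓝 0) :=
    ENNReal.tendsto_pow_atTop_nhds_zero_of_lt_one
      (ENNReal.sub_lt_self ENNReal.one_ne_top one_ne_zero hη₀.ne')
  have hsup : 1 ≤ ⨆ n, ∑' y, minorant p n y := by
    refine tsub_eq_zero_iff_le.1 (le_bot_iff.1 (ge_of_tendsto' hpow fun k => ?_))
    exact (tsub_le_tsub_left (le_iSup _ (k * N)) 1).trans (hp.one_sub_tsum_minorant_le_pow hη k)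
  rw [← (iSup_le hp.tsum_minorant_le_one).antisymm hsup]
  exact tendsto_atTop_iSup hp.monotone_tsum_minorant

theorem DoeblinCondition.tsum_minorantLimit (h : DoeblinCondition p) (hp : RowStochastic p) :
    ∑' y, minorantLimit p y = 1 := by
  unfold minorantLimit
  rw [tsum_iSup_of_monotone hp.monotone_minorant]
  exact iSup_eq_of_tendsto hp.monotone_tsum_minorant (h.tendsto_tsum_minorant hp)

theorem RowStochastic.tsum_minorantLimit_mul_le (hp : RowStochastic p) (y : α) :
    ∑' x, minorantLimit p x * p x y ≤ minorantLimit p y := by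
  simp_rw [minorantLimit, ENNReal.iSup_mul]
  rw [tsum_iSup_of_monotone fun x => (hp.monotone_minorant x).mul_const' (p x y)]
  refine iSup_le fun n => le_iSup_of_le (n + 1) (le_iInf fun x => ?_)
  rw [kernelPow_succ']
  gcongr with z
  exact minorant_le_kernelPow p n x z

theorem DoeblinCondition.tsum_minorantLimit_mul (h : DoeblinCondition p) (hp : RowStochastic p)
    (y : α) : ∑' x, minorantLimit p x * p x y = minorantLimit p y := by
  have hmass : ∑' y, ∑' x, minorantLimit p x * p x y = 1 := by
    rw [ENNReal.tsum_comm]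
    simp_rw [ENNReal.tsum_mul_left, hp _, mul_one, h.tsum_minorantLimit hp]
  exact eq_of_le_of_tsum_le (hmass ▸ ENNReal.one_ne_top) hp.tsum_minorantLimit_mul_le
    (h.tsum_minorantLimit hp ▸ hmass.ge) y

theorem DoeblinCondition.tendsto_iSup_tsum_abs_sub (h : DoeblinCondition p)
    (hp : RowStochastic p) :
    Tendsto (fun n => ⨆ x, ∑' y,
      ENNReal.ofReal |(kernelPow p n x y).toReal - (minorantLimit p y).toReal|) atTop (𝓝 0) := by
  have hlim_ne_top (y : α) : minorantLimit p y ≠ ⊤ :=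
    ENNReal.ne_top_of_tsum_ne_top (h.tsum_minorantLimit hp ▸ ENNReal.one_ne_top) y
  have hbound : Tendsto (fun n => (1 - ∑' y, minorant p n y) + (1 - ∑' y, minorant p n y))
      atTop (𝓝 0) := by
    have hdefect := ENNReal.Tendsto.sub tendsto_const_nhds (h.tendsto_tsum_minorant hp)
      (.inl ENNReal.one_ne_top)
    simpa using hdefect.add hdefect
  refine tendsto_of_tendsto_of_tendsto_of_le_of_le tendsto_const_nhds hbound
    (fun _ => zero_le) fun n => iSup_le fun x => ?_
  calc ∑' y, ENNReal.ofReal |(kernelPow p n x y).toReal - (minorantLimit p y).toReal|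
      ≤ ∑' y, ((kernelPow p n x y - minorant p n y) + (minorantLimit p y - minorant p n y)) :=
        ENNReal.tsum_le_tsum fun y => ofReal_abs_toReal_sub_toReal_le
          ((hp.kernelPow n).ne_top x y) (hlim_ne_top y) (minorant_le_kernelPow p n x y)
          (minorant_le_minorantLimit p n y)
    _ = _ := by
        rw [ENNReal.tsum_add,
          hp.tsum_tsub_minorant (hp.kernelPow n x) (minorant_le_kernelPow p n x),
          hp.tsum_tsub_minorant (h.tsum_minorantLimit hp) (minorant_le_minorantLimit p n)]

end Doeblin

section VanishingAtInfinity

variable {α : Type*} {p : α → α → ℝ≥0∞}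

theorem RowStochastic.tendsto_tsum_mul_cofinite (hp : RowStochastic p)
    (hvanish : ∀ y, Tendsto (fun x => p x y) cofinite (𝓝 0)) {f : α → ℝ≥0∞}
    (hf : Tendsto f cofinite (𝓝 0)) (hf_top : ∀ z, f z ≠ ⊤) :
    Tendsto (fun x => ∑' z, p x z * f z) cofinite (𝓝 0) := by
  rw [ENNReal.tendsto_nhds_zero]
  intro ε hε
  have hε₂ : 0 < ε / 2 := ENNReal.half_pos hε.ne'
  obtain ⟨F, hF⟩ : ∃ F : Finset α, ∀ z ∉ F, f z ≤ ε / 2 := by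
    have hfin : {z | ¬f z ≤ ε / 2}.Finite := ENNReal.tendsto_nhds_zero.1 hf _ hε₂
    exact ⟨hfin.toFinset, fun z hz => by simpa using hz⟩
  have hsum : Tendsto (fun x => ∑ z ∈ F, p x z * f z) cofinite (𝓝 0) := by
    simpa using tendsto_finsetSum F fun z _ =>
      ENNReal.Tendsto.mul_const (hvanish z) (.inr (hf_top z))
  filter_upwards [ENNReal.tendsto_nhds_zero.1 hsum _ hε₂] with x hx
  calc ∑' z, p x z * f z
      ≤ ∑' z, ((F : Set α).indicator (fun z => p x z * f z) z + p x z * (ε / 2)) := by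
        gcongr with z
        by_cases hz : z ∈ F
        · simp [hz]
        · simpa [hz] using mul_le_mul_right (hF z hz) (p x z)
    _ = ∑ z ∈ F, p x z * f z + ε / 2 := by
        rw [ENNReal.tsum_add, ENNReal.tsum_mul_right, hp x, one_mul,
          sum_eq_tsum_indicator]
    _ ≤ ε / 2 + ε / 2 := by gcongr
    _ = ε := ENNReal.add_halves ε

theorem RowStochastic.tendsto_kernelPow_cofinite [DecidableEq α] (hp : RowStochastic p)
    (hvanish : ∀ y, Tendsto (fun x => p x y) cofinite (𝓝 0)) (n : ℕ) (y : α) :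
    Tendsto (fun x => kernelPow p n x y) cofinite (𝓝 0) := by
  induction n with
  | zero =>
    refine tendsto_const_nhds.congr' ?_
    filter_upwards [(Set.finite_singleton y).compl_mem_cofinite] with x hx
    exact (if_neg hx).symm
  | succ n ih => exact hp.tendsto_tsum_mul_cofinite hvanish ih fun z => (hp.kernelPow n).ne_top z y

theorem RowStochastic.not_doeblinCondition [DecidableEq α] [Infinite α] (hp : RowStochastic p)
    (hvanish : ∀ y, Tendsto (fun x => p x y) cofinite (𝓝 0)) : ¬DoeblinCondition p := by
  rintro ⟨N, x₀, η, hη₀, hη⟩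
  exact hη₀.not_ge (ge_of_tendsto' (hp.tendsto_kernelPow_cofinite hvanish N x₀) hη)

end VanishingAtInfinity

section Avoidance

variable {α : Type*} {p : α → α → ℝ≥0∞} {C : Set α}

/-- The probability that the chain with kernel `p` avoids `C` at all the times `0, …, t`, as a
function of the starting state. -/
noncomputable def avoidProb (p : α → α → ℝ≥0∞) (C : Set α) : ℕ → α → ℝ≥0∞
  | 0 => Cᶜ.indicator 1
  | t + 1 => Cᶜ.indicator fun x => ∑' z, p x z * avoidProb p C t z

theorem avoidProb_of_mem {x : α} (hx : x ∈ C) (t : ℕ) : avoidProb p C t x = 0 := by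
  cases t <;> exact Set.indicator_of_notMem (Set.notMem_compl_iff.2 hx) _

theorem avoidProb_zero_of_notMem {x : α} (hx : x ∉ C) : avoidProb p C 0 x = 1 :=
  Set.indicator_of_mem (Set.mem_compl hx) _

theorem avoidProb_succ_of_notMem {x : α} (hx : x ∉ C) (t : ℕ) :
    avoidProb p C (t + 1) x = ∑' z, p x z * avoidProb p C t z :=
  Set.indicator_of_mem (Set.mem_compl hx) _

variable [DecidableEq α] {x₀ : α}

theorem RowStochastic.le_kernelPow_add_mul_avoidProb (hp : RowStochastic p) {M N : ℕ}
    {ε : ℝ≥0∞} (hε : ∀ t ≤ N, ∀ c ∈ C, ε ≤ kernelPow p (M + t) c x₀) {t : ℕ} (ht : t ≤ N) (x : α) :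
    ε ≤ kernelPow p (M + t) x x₀ + ε * avoidProb p C t x := by
  induction t generalizing x with
  | zero =>
    by_cases hx : x ∈ C
    · exact (hε 0 ht x hx).trans le_self_add
    · simp [avoidProb_zero_of_notMem hx]
  | succ t ih =>
    by_cases hx : x ∈ C
    · exact (hε (t + 1) ht x hx).trans le_self_add
    calc ε = ∑' z, p x z * ε := by rw [ENNReal.tsum_mul_right, hp, one_mul]
      _ ≤ ∑' z, p x z * (kernelPow p (M + t) z x₀ + ε * avoidProb p C t z) := by
          gcongr with z
          exact ih (by omega) z
      _ = kernelPow p (M + (t + 1)) x x₀ + ε * avoidProb p C (t + 1) x := by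
          simp_rw [mul_add, ENNReal.tsum_add, mul_left_comm _ ε, ENNReal.tsum_mul_left,
            avoidProb_succ_of_notMem hx]
          rfl

theorem eventually_kernelPow_pos {x : α} (hreach : ∃ n, 0 < kernelPow p n x x₀)
    (haper : ∀ᶠ n in atTop, 0 < kernelPow p n x₀ x₀) : ∀ᶠ n in atTop, 0 < kernelPow p n x x₀ := by
  obtain ⟨k, hk⟩ := hreach
  rw [← map_add_atTop_eq_nat k, eventually_map]
  filter_upwards [haper] with n hn
  rw [add_comm, kernelPow_add]
  exact (ENNReal.mul_pos hk.ne' hn.ne').trans_le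
    (ENNReal.le_tsum (f := fun z => kernelPow p k x z * kernelPow p n z x₀) x₀)

theorem exists_pos_le_kernelPow_add (hC : C.Finite)
    (hpos : ∀ c ∈ C, ∀ᶠ n in atTop, 0 < kernelPow p n c x₀) (N : ℕ) :
    ∃ (M : ℕ) (ε : ℝ≥0∞), 0 < ε ∧ ε ≠ ⊤ ∧
      ∀ t ≤ N, ∀ c ∈ C, ε ≤ kernelPow p (M + t) c x₀ := by
  obtain ⟨M, hM⟩ := eventually_atTop.1 ((eventually_all_finite hC).2 hpos)
  set f : ℕ × α → ℝ≥0∞ := fun q => kernelPow p (M + q.1) q.2 x₀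
  set s : Finset (ℕ × α) := Finset.range (N + 1) ×ˢ hC.toFinset
  refine ⟨M, min 1 (s.inf f), lt_min one_pos ?_,
    ne_top_of_le_ne_top ENNReal.one_ne_top (min_le_left _ _), fun t ht c hc => ?_⟩
  · refine (Finset.lt_inf_iff ENNReal.zero_lt_top).2 fun q hq => hM _ (Nat.le_add_right M q.1) _ ?_
    exact hC.mem_toFinset.1 (Finset.mem_product.1 hq).2
  · exact (min_le_right _ _).trans (Finset.inf_le (f := f) (b := (t, c))
      (Finset.mk_mem_product (Finset.mem_range_succ_iff.2 ht) (hC.mem_toFinset.2 hc)))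

theorem RowStochastic.doeblinCondition_of_avoidProb_le (hp : RowStochastic p) (hC : C.Finite)
    (hpos : ∀ c ∈ C, ∀ᶠ n in atTop, 0 < kernelPow p n c x₀) {N : ℕ} {θ : ℝ≥0∞} (hθ : θ < 1)
    (havoid : ∀ x, avoidProb p C N x ≤ θ) : DoeblinCondition p := by
  obtain ⟨M, ε, hε₀, hε_top, hε⟩ := exists_pos_le_kernelPow_add hC hpos N
  refine ⟨M + N, x₀, ε - ε * θ, ?_, fun x => ?_⟩
  · simpa using ENNReal.mul_lt_mul_right hε₀.ne' hε_top hθ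
  · rw [tsub_le_iff_right]
    refine (hp.le_kernelPow_add_mul_avoidProb hε le_rfl x).trans ?_
    gcongr
    exact havoid x

end Avoidance

section SubstochasticMatrix

open Matrix

theorem ofReal_mulVec_apply {κ ι : Type*} [Fintype ι] {M : Matrix κ ι ℝ} {v : ι → ℝ}
    (hM : ∀ r s, 0 ≤ M r s) (hv : ∀ s, 0 ≤ v s) (j : κ) :
    ENNReal.ofReal ((M *ᵥ v) j) = ∑ s, ENNReal.ofReal (M j s) * ENNReal.ofReal (v s) := by
  simp_rw [← ENNReal.ofReal_mul (hM j _)]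
  exact ENNReal.ofReal_sum_of_nonneg fun s _ => mul_nonneg (hM j s) (hv s)

variable {ι R : Type*} [Fintype ι] [DecidableEq ι] [Semiring R]

theorem pow_succ_mulVec_one_apply (M : Matrix ι ι R) (n : ℕ) (j : ι) :
    (M ^ (n + 1) *ᵥ 1) j = ∑ s, (M ^ n) j s * (M *ᵥ 1) s := by
  rw [pow_succ, ← mulVec_mulVec]
  rfl

variable [PartialOrder R] {M : Matrix ι ι R}

theorem pow_mulVec_one_nonneg [IsOrderedRing R] (hM₀ : ∀ r s, 0 ≤ M r s) (n : ℕ) (j : ι) :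
    0 ≤ (M ^ n *ᵥ 1) j :=
  dotProduct_nonneg_of_nonneg (pow_apply_nonneg hM₀ n j) zero_le_one

theorem antitone_pow_mulVec_one [IsOrderedRing R] (hM₀ : ∀ r s, 0 ≤ M r s)
    (hM₁ : ∀ r, (M *ᵥ 1) r ≤ 1) (j : ι) : Antitone fun n => (M ^ n *ᵥ 1) j := by
  refine antitone_nat_of_succ_le fun n => ?_
  rw [pow_succ_mulVec_one_apply]
  exact Finset.sum_le_sum fun s _ =>
    mul_le_mul_of_nonneg_left (hM₁ s) (pow_apply_nonneg hM₀ n j s)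

theorem exists_pow_mulVec_one_lt_one [IsStrictOrderedRing R] (hM₀ : ∀ r s, 0 ≤ M r s)
    (hM₁ : ∀ r, (M *ᵥ 1) r ≤ 1) (hirr : ∀ r s, ∃ n, 0 < (M ^ n) r s) (hne : M *ᵥ 1 ≠ 1) :
    ∃ N, ∀ j, (M ^ N *ᵥ 1) j < 1 := by
  obtain ⟨r₀, hr₀⟩ := Function.ne_iff.1 hne
  choose n hn using fun j => hirr j r₀
  refine ⟨∑ j, (n j + 1), fun j => ?_⟩
  have hanti := antitone_pow_mulVec_one hM₀ hM₁ j
  calc (M ^ (∑ j, (n j + 1)) *ᵥ 1) j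
      ≤ (M ^ (n j + 1) *ᵥ 1) j :=
        hanti (Finset.single_le_sum_of_canonicallyOrdered (f := fun j => n j + 1)
          (Finset.mem_univ j))
    _ = ∑ s, (M ^ n j) j s * (M *ᵥ 1) s := pow_succ_mulVec_one_apply M (n j) j
    _ < ∑ s, (M ^ n j) j s * 1 :=
        Finset.sum_lt_sum
          (fun s _ => mul_le_mul_of_nonneg_left (hM₁ s) (pow_apply_nonneg hM₀ _ j s))
          ⟨r₀, Finset.mem_univ _, mul_lt_mul_of_pos_left ((hM₁ r₀).lt_of_ne hr₀) (hn j)⟩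
    _ = (M ^ n j *ᵥ 1) j := rfl
    _ ≤ (M ^ 0 *ᵥ 1) j := hanti (Nat.zero_le (n j))
    _ = 1 := by rw [pow_zero, one_mulVec, Pi.one_apply]

end SubstochasticMatrix

section Chain

variable {m : ℕ} {Q : S m → S m → ℝ}

/-- Strong (uniform) ergodicity: convergence to a stationary distribution in total variation,
uniformly in the starting state. The distance is `ℝ≥0∞`-valued, so neither the sum nor the
supremum can take a junk value. -/
def StronglyErgodic (Q : S m → S m → ℝ) : Prop :=
  ∃ pd : S m → ℝ, IsStationary Q pd ∧
    Tendsto (fun n : ℕ => ⨆ x : S m, ∑' y : S m, ENNReal.ofReal |Pn Q n x y - pd y|) atTop (𝓝 0)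

/-- The real kernel `Q` with values in `ℝ≥0∞`; negative entries are truncated to `0`. -/
noncomputable def ennrealKernel (Q : S m → S m → ℝ) (x y : S m) : ℝ≥0∞ :=
  ENNReal.ofReal (Q x y)

theorem Stochastic.rowStochastic (hQ : Stochastic Q) : RowStochastic (ennrealKernel Q) := by
  intro x
  simp_rw [ennrealKernel]
  rw [← ENNReal.ofReal_tsum_of_nonneg (hQ.1 x) (hQ.2 x).summable, (hQ.2 x).tsum_eq,
    ENNReal.ofReal_one]

theorem Stochastic.toReal_kernelPow (hQ : Stochastic Q) (n : ℕ) (x y : S m) :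
    (kernelPow (ennrealKernel Q) n x y).toReal = Pn Q n x y := by
  induction n generalizing x with
  | zero => simp only [kernelPow, Pn]; split_ifs <;> simp
  | succ n ih =>
    have hne_top (z : S m) : ennrealKernel Q x z * kernelPow (ennrealKernel Q) n z y ≠ ⊤ :=
      ENNReal.mul_ne_top ENNReal.ofReal_ne_top ((hQ.rowStochastic.kernelPow n).ne_top z y)
    simp_rw [kernelPow, Pn, ENNReal.tsum_toReal_eq hne_top, ENNReal.toReal_mul, ih, ennrealKernel,
      ENNReal.toReal_ofReal (hQ.1 x _)]

theorem Stochastic.ofReal_Pn (hQ : Stochastic Q) (n : ℕ) (x y : S m) :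
    ENNReal.ofReal (Pn Q n x y) = kernelPow (ennrealKernel Q) n x y := by
  rw [← hQ.toReal_kernelPow, ENNReal.ofReal_toReal ((hQ.rowStochastic.kernelPow n).ne_top x y)]

theorem Stochastic.kernelPow_pos_iff (hQ : Stochastic Q) (n : ℕ) (x y : S m) :
    0 < kernelPow (ennrealKernel Q) n x y ↔ 0 < Pn Q n x y := by
  rw [← hQ.ofReal_Pn, ENNReal.ofReal_pos]

theorem Stochastic.isStationary_toReal (hQ : Stochastic Q) {μ : S m → ℝ≥0∞} (hμ : ∑' y, μ y = 1)
    (hμQ : ∀ y, ∑' x, μ x * ennrealKernel Q x y = μ y) :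
    IsStationary Q fun y => (μ y).toReal := by
  have hμ_top (y : S m) : μ y ≠ ⊤ := ENNReal.ne_top_of_tsum_ne_top (hμ ▸ ENNReal.one_ne_top) y
  refine ⟨fun _ => ENNReal.toReal_nonneg, ?_, fun y => ?_⟩
  · have hsum := ENNReal.hasSum_toReal (hμ ▸ ENNReal.one_ne_top)
    rwa [← ENNReal.tsum_toReal_eq hμ_top, hμ, ENNReal.toReal_one] at hsum
  · have hsum := ENNReal.hasSum_toReal (hμQ y ▸ hμ_top y)
    have hterm_top (x : S m) : μ x * ennrealKernel Q x y ≠ ⊤ :=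
      ENNReal.mul_ne_top (hμ_top x) ENNReal.ofReal_ne_top
    rw [← ENNReal.tsum_toReal_eq hterm_top, hμQ] at hsum
    simpa only [ENNReal.toReal_mul, ennrealKernel, ENNReal.toReal_ofReal (hQ.1 _ _)] using hsum

theorem IsStationary.exists_pos {pd : S m → ℝ} (hpd : IsStationary Q pd) : ∃ y, 0 < pd y := by
  by_contra! h
  have hzero : pd = 0 := funext fun y => (h y).antisymm (hpd.1 y)
  exact zero_ne_one (hasSum_zero.unique (hzero ▸ hpd.2.1))

theorem StronglyErgodic.exists_pos_le_Pn (h : StronglyErgodic Q) :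
    ∃ (n : ℕ) (y : S m) (δ : ℝ), 0 < δ ∧ ∀ x, δ ≤ Pn Q n x y := by
  obtain ⟨pd, hpd, hlim⟩ := h
  obtain ⟨y, hy⟩ := hpd.exists_pos
  obtain ⟨n, hn⟩ := (ENNReal.tendsto_nhds_zero.1 hlim _ (ENNReal.ofReal_pos.2 (half_pos hy))).exists
  refine ⟨n, y, pd y / 2, half_pos hy, fun x => ?_⟩
  have hdist : ENNReal.ofReal |Pn Q n x y - pd y| ≤ ENNReal.ofReal (pd y / 2) :=
    (ENNReal.le_tsum (f := fun y => ENNReal.ofReal |Pn Q n x y - pd y|) y).trans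
      ((le_iSup (fun x => ∑' y, ENNReal.ofReal |Pn Q n x y - pd y|) x).trans hn)
  have habs := (abs_le.1 ((ENNReal.ofReal_le_ofReal_iff (half_pos hy).le).1 hdist)).1
  linarith

theorem Stochastic.stronglyErgodic_iff_doeblinCondition (hQ : Stochastic Q) :
    StronglyErgodic Q ↔ DoeblinCondition (ennrealKernel Q) := by
  refine ⟨fun h => ?_, fun h => ?_⟩
  · obtain ⟨n, y, δ, hδ₀, hδ⟩ := h.exists_pos_le_Pn
    refine ⟨n, y, ENNReal.ofReal δ, ENNReal.ofReal_pos.2 hδ₀, fun x => ?_⟩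
    exact hQ.ofReal_Pn n x y ▸ ENNReal.ofReal_le_ofReal (hδ x)
  · have hp := hQ.rowStochastic
    refine ⟨_, hQ.isStationary_toReal (h.tsum_minorantLimit hp) (h.tsum_minorantLimit_mul hp), ?_⟩
    simpa only [hQ.toReal_kernelPow] using h.tendsto_iSup_tsum_abs_sub hp

end Chain

section Levels

variable {ι : Type*}

theorem tsum_levels [Fintype ι] (f : ℕ × ι → ℝ≥0∞) :
    ∑' z, f z = ∑ s, f (0, s) + ∑ s, ∑' k : ℕ, f (k + 1, s) := by
  rw [ENNReal.tsum_prod', ENNReal.tsum_comm, tsum_fintype, ← Finset.sum_add_distrib]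
  exact Finset.sum_congr rfl fun s _ => tsum_eq_zero_add' ENNReal.summable

theorem tendsto_cofinite_of_forall_phase [Finite ι] {β : Type*} {l : Filter β} {f : ℕ × ι → β}
    (hf : ∀ j, Tendsto (fun i => f (i, j)) atTop l) : Tendsto f cofinite l := by
  intro u hu
  have hfin (j : ι) : {i | f (i, j) ∉ u}.Finite := by
    have := hf j hu
    rwa [← Nat.cofinite_eq_atTop] at this
  refine (Set.finite_iUnion fun j => (hfin j).image fun i => (i, j)).subset ?_
  rintro ⟨i, j⟩ hij
  exact Set.mem_iUnion.2 ⟨j, i, hij, rfl⟩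

end Levels

section GIG1Chain

open Matrix

variable {m : ℕ} {A B : ℤ → Matrix (Fin m) (Fin m) ℝ}

theorem tendsto_tsum_ennrealKernel_upper (A B : ℤ → Matrix (Fin m) (Fin m) ℝ) (j s : Fin m) :
    Tendsto (fun i : ℕ => ∑' k : ℕ, ennrealKernel (P A B) (i + 1, j) (k + 1, s)) atTop
      (𝓝 (∑' n : ℤ, ENNReal.ofReal (A n j s))) :=
  tendsto_tsum_natCast_sub fun n => ENNReal.ofReal (A n j s)

theorem tsum_ennrealKernel_upper_le (A B : ℤ → Matrix (Fin m) (Fin m) ℝ) (i : ℕ) (j s : Fin m) :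
    ∑' k : ℕ, ennrealKernel (P A B) (i + 1, j) (k + 1, s) ≤
      ∑' n : ℤ, ENNReal.ofReal (A n j s) :=
  ENNReal.tsum_comp_le_tsum_of_injective (f := fun k : ℕ => (k - i : ℤ)) (fun k l h => by grind)
    fun n => ENNReal.ofReal (A n j s)

theorem Stochastic.sum_tsum_ofReal_le_one (hP : Stochastic (P A B)) (j : Fin m) :
    ∑ s, ∑' n : ℤ, ENNReal.ofReal (A n j s) ≤ 1 := by
  refine le_of_tendsto' (tendsto_finsetSum _ fun s _ => tendsto_tsum_ennrealKernel_upper A B j s)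
    fun i => ?_
  rw [← hP.rowStochastic (i + 1, j), tsum_levels]
  exact le_add_self

theorem Stochastic.tsum_ofReal_ne_top (hP : Stochastic (P A B)) (j s : Fin m) :
    ∑' n : ℤ, ENNReal.ofReal (A n j s) ≠ ⊤ :=
  ne_top_of_le_ne_top ENNReal.one_ne_top
    ((Finset.single_le_sum_of_canonicallyOrdered (Finset.mem_univ s)).trans
      (hP.sum_tsum_ofReal_le_one j))

theorem matA_nonneg (hA₀ : ∀ k r s, 0 ≤ A k r s) (r s : Fin m) : 0 ≤ matA A r s :=
  tsum_nonneg fun k => hA₀ k r s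

theorem Stochastic.ofReal_matA (hP : Stochastic (P A B)) (hA₀ : ∀ k r s, 0 ≤ A k r s)
    (j s : Fin m) : ENNReal.ofReal (matA A j s) = ∑' n : ℤ, ENNReal.ofReal (A n j s) := by
  rw [← ENNReal.ofReal_toReal (hP.tsum_ofReal_ne_top j s),
    ENNReal.tsum_toReal_eq fun _ => ENNReal.ofReal_ne_top]
  simp_rw [ENNReal.toReal_ofReal (hA₀ _ j s)]
  rfl

theorem Stochastic.ofReal_matA_mulVec_one (hP : Stochastic (P A B))
    (hA₀ : ∀ k r s, 0 ≤ A k r s) (j : Fin m) :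
    ENNReal.ofReal ((matA A *ᵥ 1) j) = ∑ s, ∑' n : ℤ, ENNReal.ofReal (A n j s) := by
  rw [ofReal_mulVec_apply (v := 1) (matA_nonneg hA₀) fun _ => zero_le_one]
  simp [hP.ofReal_matA hA₀]

theorem Stochastic.matA_mulVec_one_le_one (hP : Stochastic (P A B))
    (hA₀ : ∀ k r s, 0 ≤ A k r s) (j : Fin m) : (matA A *ᵥ 1) j ≤ 1 := by
  rw [← ENNReal.ofReal_le_one, hP.ofReal_matA_mulVec_one hA₀]
  exact hP.sum_tsum_ofReal_le_one j

theorem Stochastic.tendsto_ennrealKernel_level_zero (hP : Stochastic (P A B))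
    (hA₀ : ∀ k r s, 0 ≤ A k r s) (he : matA A *ᵥ 1 = 1) (j s : Fin m) :
    Tendsto (fun i : ℕ => ennrealKernel (P A B) (i + 1, j) (0, s)) atTop (𝓝 0) := by
  set up : ℕ → ℝ≥0∞ := fun i => ∑ s, ∑' k : ℕ, ennrealKernel (P A B) (i + 1, j) (k + 1, s)
  have hrow (i : ℕ) : ∑ s, ennrealKernel (P A B) (i + 1, j) (0, s) + up i = 1 := by
    rw [← tsum_levels, hP.rowStochastic]
  have hup : Tendsto up atTop (𝓝 1) := by
    have hlim := tendsto_finsetSum Finset.univ fun s _ => tendsto_tsum_ennrealKernel_upper A B j s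
    rwa [← hP.ofReal_matA_mulVec_one hA₀, he, Pi.one_apply, ENNReal.ofReal_one] at hlim
  have hdefect : Tendsto (fun i => 1 - up i) atTop (𝓝 0) := by
    simpa using ENNReal.Tendsto.sub tendsto_const_nhds hup (.inl ENNReal.one_ne_top)
  refine tendsto_of_tendsto_of_tendsto_of_le_of_le tendsto_const_nhds hdefect
    (fun _ => zero_le) fun i => ?_
  have hup_top : up i ≠ ⊤ := ne_top_of_le_ne_top ENNReal.one_ne_top (le_add_self.trans (hrow i).le)
  exact (Finset.single_le_sum_of_canonicallyOrdered (f := fun s =>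
    ennrealKernel (P A B) (i + 1, j) (0, s)) (Finset.mem_univ s)).trans_eq
    (ENNReal.eq_sub_of_add_eq hup_top (hrow i))

theorem Stochastic.tendsto_ennrealKernel_level_succ (hP : Stochastic (P A B)) (j s : Fin m)
    (k : ℕ) :
    Tendsto (fun i : ℕ => ennrealKernel (P A B) (i + 1, j) (k + 1, s)) atTop (𝓝 0) := by
  have hinj : Function.Injective fun i : ℕ => (k - i : ℤ) := fun i l h => by grind
  rw [← Nat.cofinite_eq_atTop]
  exact (ENNReal.tendsto_cofinite_zero_of_tsum_ne_top (hP.tsum_ofReal_ne_top j s)).comp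
    hinj.tendsto_cofinite

theorem Stochastic.tendsto_ennrealKernel_cofinite (hP : Stochastic (P A B))
    (hA₀ : ∀ k r s, 0 ≤ A k r s) (he : matA A *ᵥ 1 = 1) (y : S m) :
    Tendsto (fun x => ennrealKernel (P A B) x y) cofinite (𝓝 0) := by
  refine tendsto_cofinite_of_forall_phase fun j => ?_
  rw [← tendsto_add_atTop_iff_nat 1]
  obtain ⟨_ | k, s⟩ := y
  · exact hP.tendsto_ennrealKernel_level_zero hA₀ he j s
  · exact hP.tendsto_ennrealKernel_level_succ j s k

theorem Stochastic.avoidProb_level_zero_le (hP : Stochastic (P A B))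
    (hA₀ : ∀ k r s, 0 ≤ A k r s) (t : ℕ) (x : S m) :
    avoidProb (ennrealKernel (P A B)) {z | z.1 = 0} t x ≤
      ENNReal.ofReal ((matA A ^ t *ᵥ 1) x.2) := by
  induction t generalizing x with
  | zero =>
    rw [pow_zero, one_mulVec, Pi.one_apply, ENNReal.ofReal_one]
    exact Set.indicator_apply_le' (fun _ => le_rfl) fun _ => zero_le_one
  | succ t ih =>
    obtain ⟨_ | i, j⟩ := x
    · exact (avoidProb_of_mem (C := {z : S m | z.1 = 0}) rfl _).trans_le zero_le
    set v : Fin m → ℝ≥0∞ := fun s => ENNReal.ofReal ((matA A ^ t *ᵥ 1) s)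
    calc avoidProb (ennrealKernel (P A B)) {z | z.1 = 0} (t + 1) (i + 1, j)
        = ∑ s, ∑' k : ℕ, ennrealKernel (P A B) (i + 1, j) (k + 1, s) *
            avoidProb (ennrealKernel (P A B)) {z | z.1 = 0} t (k + 1, s) := by
          rw [avoidProb_succ_of_notMem (by simp), tsum_levels]
          simp [avoidProb_of_mem]
      _ ≤ ∑ s, (∑' k : ℕ, ennrealKernel (P A B) (i + 1, j) (k + 1, s)) * v s := by
          simp_rw [← ENNReal.tsum_mul_right]
          gcongr with s _ k
          exact ih (k + 1, s)
      _ ≤ ∑ s, ENNReal.ofReal (matA A j s) * v s := by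
          simp_rw [hP.ofReal_matA hA₀]
          gcongr with s
          exact tsum_ennrealKernel_upper_le A B i j s
      _ = ENNReal.ofReal ((matA A ^ (t + 1) *ᵥ 1) j) := by
          rw [pow_succ', ← mulVec_mulVec, ofReal_mulVec_apply (matA_nonneg hA₀)
            (pow_mulVec_one_nonneg (matA_nonneg hA₀) t)]

theorem Stochastic.exists_avoidProb_level_zero_le (hP : Stochastic (P A B))
    (hA₀ : ∀ k r s, 0 ≤ A k r s) (hirr : MatIrreducible (matA A)) (hne : matA A *ᵥ 1 ≠ 1) :
    ∃ (N : ℕ) (θ : ℝ≥0∞), θ < 1 ∧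
      ∀ x, avoidProb (ennrealKernel (P A B)) {z | z.1 = 0} N x ≤ θ := by
  obtain ⟨N, hN⟩ := exists_pow_mulVec_one_lt_one (matA_nonneg hA₀) (hP.matA_mulVec_one_le_one hA₀)
    (fun r s => (hirr r s).imp fun _ h => h.2) hne
  refine ⟨N, Finset.univ.sup fun j => ENNReal.ofReal ((matA A ^ N *ᵥ 1) j), ?_, fun x => ?_⟩
  · rw [Finset.sup_lt_iff one_pos]
    exact fun j _ => ENNReal.ofReal_lt_one.2 (hN j)
  · exact (hP.avoidProb_level_zero_le hA₀ N x).trans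
      (Finset.le_sup (f := fun j => ENNReal.ofReal ((matA A ^ N *ᵥ 1) j)) (Finset.mem_univ x.2))

theorem Stochastic.doeblinCondition_of_phase_not_stochastic
    (hP : Stochastic (P A B)) (hA₀ : ∀ k r s, 0 ≤ A k r s) (hirr : ChainIrreducible (P A B))
    (hap : ChainAperiodic (P A B)) (hphaseirr : MatIrreducible (matA A))
    (hne : matA A *ᵥ 1 ≠ 1) : DoeblinCondition (ennrealKernel (P A B)) := by
  obtain ⟨j, _⟩ := Function.ne_iff.1 hne
  obtain ⟨N, θ, hθ, havoid⟩ := hP.exists_avoidProb_level_zero_le hA₀ hphaseirr hne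
  have hlevel : {z : S m | z.1 = 0}.Finite :=
    ((Set.finite_singleton 0).prod Set.finite_univ).subset fun z hz => ⟨hz, trivial⟩
  have hreach (x : S m) : ∃ n, 0 < kernelPow (ennrealKernel (P A B)) n x (0, j) :=
    (hirr x (0, j)).imp fun n h => (hP.kernelPow_pos_iff n _ _).2 h.2
  have haper : ∀ᶠ n in atTop, 0 < kernelPow (ennrealKernel (P A B)) n (0, j) (0, j) :=
    (eventually_atTop.2 (hap (0, j))).mono fun n h => (hP.kernelPow_pos_iff n _ _).2 h
  exact hP.rowStochastic.doeblinCondition_of_avoidProb_le hlevel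
    (fun c _ => eventually_kernelPow_pos (hreach c) haper) hθ havoid

end GIG1Chain

/-- An irreducible aperiodic `GI/G/1`-type Markov chain (with irreducible
phase matrix `A`) is strongly (uniformly) ergodic iff `A` is not stochastic, i.e. `Ae ≠ e`. -/
theorem strongly_ergodic_iff_phase_not_stochastic {m : ℕ} (hm : 0 < m)
    (A B : ℤ → Matrix (Fin m) (Fin m) ℝ)
    (hA0 : ∀ k r s, 0 ≤ A k r s) (hB0 : ∀ k r s, 0 ≤ B k r s)
    (hP : Stochastic (P A B))
    (hirr : ChainIrreducible (P A B)) (hap : ChainAperiodic (P A B))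
    (hphaseirr : MatIrreducible (matA A)) :
    ((∃ pd : S m → ℝ, IsStationary (P A B) pd ∧
        Tendsto (fun n : ℕ => ⨆ x : S m, ∑' y : S m, ENNReal.ofReal |Pn (P A B) n x y - pd y|)
          atTop (nhds 0))
      ↔ (matA A).mulVec 1 ≠ 1) := by
  have : Nonempty (Fin m) := ⟨⟨0, hm⟩⟩
  change StronglyErgodic (P A B) ↔ _
  rw [hP.stronglyErgodic_iff_doeblinCondition]
  refine ⟨fun hdoeblin he => ?_, fun hne => ?_⟩
  · exact hP.rowStochastic.not_doeblinCondition (hP.tendsto_ennrealKernel_cofinite hA0 he) hdoeblin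
  · exact hP.doeblinCondition_of_phase_not_stochastic hA0 hirr hap hphaseirr hne

end GIG1
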